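/- Let X be a proper geodesic metric space and p ∈ X. Then every point of MinCut(p) that is not in Cut(p) is conjugate to p along some geodesic from p. -/

import Mathlib

open Set Metric Topology Filter
open scoped ENNReal

noncomputable section

namespace InjSoul

/-- The unit interval `[0,1] ⊆ ℝ`. -/
abbrev I01 : Set ℝ := Set.Icc (0 : ℝ) 1

variable {X : Type*} [MetricSpace X]

/-- `0` as a point of `[0,1]`. -/
def pt0 : I01 := ⟨0, by norm_num⟩

/-- `1` as a point of `[0,1]`. -/
def pt1 : I01 := ⟨1, by norm_num⟩

/-- `c : [0,1] → X` is a geodesic of speed (= length) `L`. -/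
def IsGeod (c : C(I01, X)) (L : ℝ) : Prop :=
  0 ≤ L ∧ ∀ s t : I01, dist (c s) (c t) = L * |(s : ℝ) - (t : ℝ)|

/-- `γ : [0,1] → X` is a local geodesic of speed (= length) `L`. -/
def IsLocGeod (γ : C(I01, X)) (L : ℝ) : Prop :=
  0 ≤ L ∧ ∀ t : I01, ∃ ε > 0, ∀ s s' : I01,
    |(s : ℝ) - (t : ℝ)| < ε → |(s' : ℝ) - (t : ℝ)| < ε →
      dist (γ s) (γ s') = L * |(s : ℝ) - (s' : ℝ)|

/-- `X` is a geodesic space: any two points are joined by a geodesic. -/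
def GeodesicSpace (X : Type*) [MetricSpace X] : Prop :=
  ∀ x y : X, ∃ (c : C(I01, X)) (L : ℝ), IsGeod c L ∧ c pt0 = x ∧ c pt1 = y

/-- The cut locus of `p`: all points joined to `p` by at least two distinct geodesics. -/
def Cut (p : X) : Set X :=
  {q | ∃ (γ σ : C(I01, X)) (Lγ Lσ : ℝ), IsGeod γ Lγ ∧ IsGeod σ Lσ ∧
    γ pt0 = p ∧ γ pt1 = q ∧ σ pt0 = p ∧ σ pt1 = q ∧ γ ≠ σ}

/-- The injectivity radius of `p`, an element of `[0,∞]` (`∞` if `Cut p = ∅`). -/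
def inj (p : X) : ℝ≥0∞ := ⨅ q ∈ Cut p, edist p q

/-- The minimal cut locus of `p`: points `γ t₀`, `t₀ ∈ (0,1)`, on a nontrivial local geodesic
`γ` issuing in `p` such that `γ` is minimizing on `[0,t₀]` but on no larger interval `[0,t]`. -/
def MinCut (p : X) : Set X :=
  {q | ∃ (γ : C(I01, X)) (L : ℝ) (t₀ : ℝ) (ht₀ : t₀ ∈ Set.Ioo (0 : ℝ) 1),
      IsLocGeod γ L ∧ 0 < L ∧ γ pt0 = p ∧ γ ⟨t₀, Set.mem_Icc_of_Ioo ht₀⟩ = q ∧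
      dist p q = L * t₀ ∧
      ∀ t : ℝ, ∀ ht : t ∈ Set.Ioc t₀ 1,
        dist p (γ ⟨t, ⟨(ht₀.1.trans ht.1).le, ht.2⟩⟩) ≠ L * t}

/-- The minimal radius of `p`, an element of `[0,∞]` (`∞` if `MinCut p = ∅`). -/
def minRad (p : X) : ℝ≥0∞ := ⨅ q ∈ MinCut p, edist p q

/-- The space `X̃_p` of local geodesics issuing in `p` (including the constant map), viewed
as a subset of the continuous maps `C([0,1], X)` whose metric is the uniform metric `ρ`. -/
def LocGeodFrom (p : X) : Set C(I01, X) := {γ | (∃ L, IsLocGeod γ L) ∧ γ pt0 = p}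

/-- The endpoint map `exp_p : X̃_p → X`, `γ ↦ γ 1`. -/
def endpt : C(I01, X) → X := fun γ => γ pt1

/-- `γ 1` is conjugate to `p = γ 0` along the local geodesic `γ`: no neighborhood `U` of `γ`
in `X̃_p` is mapped homeomorphically onto its image by the endpoint map. -/
def ConjugateAlong (p : X) (γ : C(I01, X)) : Prop :=
  γ ∈ LocGeodFrom p ∧
    ¬ ∃ U : Set C(I01, X), U ⊆ LocGeodFrom p ∧ U ∈ 𝓝[LocGeodFrom p] γ ∧
      Topology.IsEmbedding (U.restrict endpt)

/-- The conjugate radius of `p`: the infimum of lengths of local geodesics issuing in `p`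
along which the endpoint is conjugate to `p` (`∞` if there are none). -/
def conjRad (p : X) : ℝ≥0∞ :=
  sInf {l | ∃ (γ : C(I01, X)) (L : ℝ), IsLocGeod γ L ∧ γ pt0 = p ∧
    ConjugateAlong p γ ∧ l = ENNReal.ofReal L}

/-- The conjugate radius of the space `X`. -/
def conjSpace (X : Type*) [MetricSpace X] : ℝ≥0∞ := ⨅ p : X, conjRad p

/-!
Let `γ` be a local geodesic from `p` that is minimizing exactly up to `q = γ t₀`, and let `σ` be its
arc from `p` to `q`. Geodesics from `p` with endpoints in a compact set form a compact set, so if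
`q ∉ Cut p` then every geodesic from `p` to a point close to `q` is uniformly close to `σ`, the only
geodesic from `p` to `q`. For `t` slightly larger than `t₀`, a geodesic from `p` to `γ t` and
the arc of `γ` over `[0, t]` are thus two local geodesics close to `σ` with the same endpoint. If
`exp_p` were injective near `σ` they would coincide, and `γ` would still be minimizing on `[0, t]`.
-/

section MetricSpaces

open scoped NNReal

lemma lipschitzWith_of_forall_eventually_dist_le {E : Type*} [PseudoMetricSpace E] {f : ℝ → E}
    {C : ℝ≥0} (hf : ∀ x, ∀ᶠ y in 𝓝 x, dist (f y) (f x) ≤ C * dist y x) : LipschitzWith C f := by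
  have hcont : Continuous f := continuous_iff_continuousAt.2 fun x ↦ by
    obtain ⟨r, hr, h⟩ := Metric.eventually_nhds_iff.1 (hf x)
    exact continuousAt_of_locally_lipschitz hr C fun y hy ↦ h hy
  refine LipschitzWith.of_dist_le_mul fun a b ↦ ?_
  wlog hab : a ≤ b generalizing a b with H
  · simpa only [dist_comm] using H b a (le_of_not_ge hab)
  have hslope : ∀ x ∈ Ico a b, ∀ r, (C : ℝ) < r →
      ∃ᶠ y in 𝓝[>] x, slope (fun z ↦ dist (f z) (f a)) x y < r := by
    intro x _ r hr
    refine Eventually.frequently ?_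
    filter_upwards [(hf x).filter_mono nhdsWithin_le_nhds, self_mem_nhdsWithin] with y hy hxy
    have hpos : 0 < y - x := sub_pos.2 hxy
    rw [slope_def_field, div_lt_iff₀ hpos]
    rw [Real.dist_eq, abs_of_pos hpos] at hy
    calc dist (f y) (f a) - dist (f x) (f a) ≤ dist (f y) (f x) := by
          linarith [dist_triangle (f y) (f x) (f a)]
      _ ≤ C * (y - x) := hy
      _ < r * (y - x) := by gcongr
  have hbound := image_le_of_liminf_slope_right_le_deriv_boundary
    (f := fun z ↦ dist (f z) (f a)) (B := fun z ↦ C * (z - a)) (B' := fun _ ↦ C)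
    (by fun_prop) (by simp) (by fun_prop)
    (fun x _ ↦ by simpa using (((hasDerivAt_id x).sub_const a).const_mul (C : ℝ)).hasDerivWithinAt)
    hslope (right_mem_Icc.2 hab)
  rwa [dist_comm, dist_comm a, Real.dist_eq, abs_of_nonneg (sub_nonneg.2 hab)]

lemma isCompact_setOfPred_lipschitzWith_and_mem {α : Type*} [PseudoMetricSpace α] [ProperSpace X]
    (C : ℝ≥0) (a : α) {K : Set X} (hK : IsCompact K) :
    IsCompact {f : C(α, X) | LipschitzWith C f ∧ f a ∈ K} := by
  have himage : ContinuousMap.toFun '' {f : C(α, X) | LipschitzWith C f ∧ f a ∈ K} =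
      {f : α → X | LipschitzWith C f ∧ f a ∈ K} :=
    Subset.antisymm (by rintro _ ⟨f, hf, rfl⟩; exact hf)
      fun f hf ↦ ⟨⟨f, hf.1.continuous⟩, hf, rfl⟩
  refine ArzelaAscoli.isCompact_of_equicontinuous _ ?_
    (LipschitzWith.uniformEquicontinuous _ C fun f ↦ f.2.1).equicontinuous
  rw [himage]
  refine (isCompact_univ_pi fun x ↦ hK.cthickening (r := C * dist x a)).of_isClosed_subset
    ((isClosed_setOfPred_lipschitzWith C).inter (hK.isClosed.preimage (continuous_apply a))) ?_
  exact fun f hf x _ ↦ mem_cthickening_of_dist_le _ _ _ _ hf.2 (hf.1.dist_le_mul x a)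

end MetricSpaces

@[simp]
lemma pt0_eq_zero : pt0 = 0 := rfl

@[simp]
lemma pt1_eq_one : pt1 = 1 := rfl

section Geodesics

variable {c : C(I01, X)} {L : ℝ}

lemma IsGeod.isLocGeod (h : IsGeod c L) : IsLocGeod c L :=
  ⟨h.1, fun _ ↦ ⟨1, one_pos, fun s s' _ _ ↦ h.2 s s'⟩⟩

lemma IsGeod.dist_pt0_pt1 (h : IsGeod c L) : dist (c pt0) (c pt1) = L := by
  simpa using h.2 pt0 pt1

lemma IsGeod.lipschitzWith (h : IsGeod c L) : LipschitzWith L.toNNReal c :=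
  LipschitzWith.of_dist_le_mul fun s t ↦ by
    rw [h.2, Real.coe_toNNReal L h.1, Subtype.dist_eq, Real.dist_eq]

lemma isClosed_setOfPred_exists_isGeod : IsClosed {c : C(I01, X) | ∃ L, IsGeod c L} := by
  have hset : {c : C(I01, X) | ∃ L, IsGeod c L} = ⋂ (s : I01) (t : I01),
      {c | dist (c s) (c t) = dist (c pt0) (c pt1) * |(s : ℝ) - t|} := by
    ext c
    simp only [mem_iInter, mem_ofPred_eq]
    refine ⟨?_, fun h ↦ ⟨_, dist_nonneg, h⟩⟩
    rintro ⟨L, hc⟩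
    rw [hc.dist_pt0_pt1]
    exact hc.2
  rw [hset]
  exact isClosed_iInter fun s ↦ isClosed_iInter fun t ↦ isClosed_eq (by fun_prop) (by fun_prop)

lemma isCompact_setOfPred_isGeod [ProperSpace X] {K K' : Set X} (hK : IsCompact K)
    (hK' : IsCompact K') :
    IsCompact {c : C(I01, X) | (∃ L, IsGeod c L) ∧ c pt0 ∈ K ∧ c pt1 ∈ K'} := by
  refine (isCompact_setOfPred_lipschitzWith_and_mem (diam (K ∪ K')).toNNReal pt0
    hK).of_isClosed_subset ?_ ?_
  · exact isClosed_setOfPred_exists_isGeod.inter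
      ((hK.isClosed.preimage (by fun_prop)).inter (hK'.isClosed.preimage (by fun_prop)))
  · rintro c ⟨⟨L, hc⟩, h0, h1⟩
    have hL : L ≤ diam (K ∪ K') := hc.dist_pt0_pt1 ▸
      dist_le_diam_of_mem (hK.union hK').isBounded (.inl h0) (.inr h1)
    exact ⟨hc.lipschitzWith.weaken (Real.toNNReal_le_toNNReal hL), h0⟩

theorem eventually_forall_isGeod_mem_of_notMem_cut [ProperSpace X] {p q : X} (hq : q ∉ Cut p)
    {σ : C(I01, X)} (hσ : IsGeod σ L) (h0 : σ pt0 = p) (h1 : σ pt1 = q)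
    {U : Set C(I01, X)} (hU : U ∈ 𝓝 σ) :
    ∀ᶠ x in 𝓝 q, ∀ c L', IsGeod c L' → c pt0 = p → c pt1 = x → c ∈ U := by
  let K : Set C(I01, X) :=
    {c | (∃ L, IsGeod c L) ∧ c pt0 ∈ ({p} : Set X) ∧ c pt1 ∈ closedBall q 1} \ interior U
  have hK : IsCompact K :=
    (isCompact_setOfPred_isGeod isCompact_singleton (isCompact_closedBall q 1)).diff isOpen_interior
  have hqK : q ∉ endpt '' K := by
    rintro ⟨c, ⟨⟨⟨L', hc⟩, hc0, -⟩, hcU⟩, hc1⟩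
    have hcσ : c ≠ σ := fun h ↦ hcU (h ▸ mem_interior_iff_mem_nhds.2 hU)
    exact hq ⟨c, σ, L', L, hc, hσ, hc0, hc1, h0, h1, hcσ⟩
  have hclosed : IsClosed (endpt '' K) := (hK.image (continuous_eval_const pt1)).isClosed
  filter_upwards [hclosed.compl_mem_nhds hqK, closedBall_mem_nhds q one_pos]
    with x hxK hxq c L' hc hc0 hc1
  by_contra hcU
  exact hxK ⟨c, ⟨⟨⟨L', hc⟩, hc0, hc1.symm ▸ hxq⟩, fun h ↦ hcU (interior_subset h)⟩, hc1⟩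

end Geodesics

section LocalGeodesics

variable {γ : C(I01, X)} {L L' : ℝ}

lemma IsLocGeod.eventually_dist_eq (h : IsLocGeod γ L) (t : I01) :
    ∀ᶠ s in 𝓝 t, dist (γ s) (γ t) = L * dist s t := by
  obtain ⟨ε, hε, H⟩ := h.2 t
  filter_upwards [ball_mem_nhds t hε] with s hs
  exact H s t hs (by simpa using hε)

lemma IsLocGeod.speed_unique (h : IsLocGeod γ L) (h' : IsLocGeod γ L') : L = L' := by
  obtain ⟨s, ⟨hs, hs'⟩, hne⟩ := (((h.eventually_dist_eq 0).and
    (h'.eventually_dist_eq 0)).filter_mono nhdsWithin_le_nhds |>.and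
      (self_mem_nhdsWithin (s := {0}ᶜ))).exists
  exact mul_right_cancel₀ (dist_ne_zero.2 hne) (hs.symm.trans hs')

lemma IsLocGeod.dist_le (h : IsLocGeod γ L) (s t : I01) : dist (γ s) (γ t) ≤ L * dist s t := by
  lift L to NNReal using h.1
  have hlip : LipschitzWith L (IccExtend zero_le_one γ) := by
    refine lipschitzWith_of_forall_eventually_dist_le fun x ↦ ?_
    filter_upwards [(continuous_projIcc (h := zero_le_one)).continuousAt.eventually
      (h.eventually_dist_eq (projIcc 0 1 zero_le_one x))] with y hy
    have hproj := (LipschitzWith.projIcc (zero_le_one (α := ℝ))).dist_le_mul y x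
    rw [NNReal.coe_one, one_mul] at hproj
    exact hy.trans_le (mul_le_mul_of_nonneg_left hproj L.2)
  simpa only [IccExtend_val, ← Subtype.dist_eq] using hlip.dist_le_mul (s : ℝ) t

lemma IsLocGeod.isGeod (h : IsLocGeod γ L) (hd : dist (γ pt0) (γ pt1) = L) : IsGeod γ L := by
  refine ⟨h.1, fun s t ↦ le_antisymm (h.dist_le s t) ?_⟩
  wlog hst : s ≤ t generalizing s t with H
  · simpa only [dist_comm, abs_sub_comm] using H t s (le_of_not_ge hst)
  have hs : dist (γ pt0) (γ s) ≤ L * s := by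
    simpa [Subtype.dist_eq, Real.dist_eq, abs_of_nonneg s.2.1] using h.dist_le 0 s
  have ht : dist (γ t) (γ pt1) ≤ L * (1 - t) := by
    simpa [Subtype.dist_eq, Real.dist_eq, abs_sub_comm (t : ℝ), abs_of_nonneg (sub_nonneg.2 t.2.2)]
      using h.dist_le t 1
  rw [abs_sub_comm, abs_of_nonneg (sub_nonneg.2 (Subtype.coe_le_coe.2 hst))]
  linarith [dist_triangle4 (γ pt0) (γ s) (γ t) (γ pt1)]

/-- The arc of `γ` over `[0, t]`, reparametrized proportionally to `[0, 1]`; along a local geodesic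
of speed `L` it has speed `L * t`. -/
def initialArc (γ : C(I01, X)) (t : I01) : C(I01, X) := γ.comp (.mulLeft t)

lemma initialArc_pt0 (γ : C(I01, X)) (t : I01) : initialArc γ t pt0 = γ pt0 := by
  simp [initialArc]

lemma initialArc_pt1 (γ : C(I01, X)) (t : I01) : initialArc γ t pt1 = γ t := by
  simp [initialArc]

lemma continuous_initialArc (γ : C(I01, X)) : Continuous (initialArc γ) :=
  ContinuousMap.continuous_of_continuous_uncurry _ (γ.continuous.comp continuous_mul)

lemma IsLocGeod.isLocGeod_initialArc (h : IsLocGeod γ L) (t : I01) :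
    IsLocGeod (initialArc γ t) (L * t) := by
  have hscale (s s' : I01) : |((t * s : I01) : ℝ) - (t * s' : I01)| = t * |(s : ℝ) - s'| := by
    rw [Icc.coe_mul, Icc.coe_mul, ← mul_sub, abs_mul, abs_of_nonneg t.2.1]
  refine ⟨mul_nonneg h.1 t.2.1, fun u ↦ ?_⟩
  obtain ⟨ε, hε, H⟩ := h.2 (t * u)
  have hnear (s : I01) (hs : |(s : ℝ) - u| < ε) : |((t * s : I01) : ℝ) - (t * u : I01)| < ε := by
    rw [hscale]
    exact (mul_le_of_le_one_left (abs_nonneg _) t.2.2).trans_lt hs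
  refine ⟨ε, hε, fun s s' hs hs' ↦ ?_⟩
  rw [mul_assoc, ← hscale]
  exact H _ _ (hnear s hs) (hnear s' hs')

lemma IsLocGeod.isGeod_initialArc_iff (h : IsLocGeod γ L) (t : I01) :
    IsGeod (initialArc γ t) (L * t) ↔ dist (γ pt0) (γ t) = L * t := by
  refine ⟨fun hc ↦ ?_, fun hd ↦ (h.isLocGeod_initialArc t).isGeod ?_⟩
  · simpa only [initialArc_pt0, initialArc_pt1] using hc.dist_pt0_pt1
  · rwa [initialArc_pt0, initialArc_pt1]

lemma IsLocGeod.initialArc_mem_locGeodFrom (h : IsLocGeod γ L) (t : I01) :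
    initialArc γ t ∈ LocGeodFrom (γ pt0) :=
  ⟨⟨_, h.isLocGeod_initialArc t⟩, initialArc_pt0 γ t⟩

theorem IsLocGeod.eventually_isGeod_initialArc_of_injOn_endpt [ProperSpace X]
    (hgeo : GeodesicSpace X) (hγ : IsLocGeod γ L) {t₀ : I01}
    (hmin : IsGeod (initialArc γ t₀) (L * t₀)) (hcut : γ t₀ ∉ Cut (γ pt0))
    {U : Set C(I01, X)} (hU : U ∈ 𝓝[LocGeodFrom (γ pt0)] (initialArc γ t₀))
    (hinj : InjOn endpt U) :
    ∀ᶠ t in 𝓝 t₀, IsGeod (initialArc γ t) (L * t) := by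
  obtain ⟨V, hV, hVU⟩ := mem_nhdsWithin_iff_exists_mem_nhds_inter.1 hU
  have hgeodesics := γ.continuous.continuousAt.eventually
    (eventually_forall_isGeod_mem_of_notMem_cut hcut hmin (initialArc_pt0 γ t₀)
      (initialArc_pt1 γ t₀) hV)
  have harcs := (continuous_initialArc γ).continuousAt.eventually hV
  filter_upwards [hgeodesics, harcs] with t hgeodesics_t harc_t
  obtain ⟨c, L', hc, hc0, hc1⟩ := hgeo (γ pt0) (γ t)
  have hcU : c ∈ U := hVU ⟨hgeodesics_t c L' hc hc0 hc1, ⟨L', hc.isLocGeod⟩, hc0⟩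
  have harcU : initialArc γ t ∈ U := hVU ⟨harc_t, hγ.initialArc_mem_locGeodFrom t⟩
  obtain rfl : c = initialArc γ t :=
    hinj hcU harcU (hc1.trans (initialArc_pt1 γ t).symm)
  rwa [← hc.isLocGeod.speed_unique (hγ.isLocGeod_initialArc t)]

end LocalGeodesics

/-- In a proper geodesic metric space, every point of `MinCut p` that is not
in `Cut p` is conjugate to `p` along some geodesic from `p`. -/
theorem conjugate_of_mem_minCut_not_cut {X : Type*} [MetricSpace X] [ProperSpace X]
    (hgeo : GeodesicSpace X) (p q : X) (hq : q ∈ MinCut p \ Cut p) :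
    ∃ (γ : C(I01, X)) (L : ℝ), IsGeod γ L ∧ γ pt0 = p ∧ γ pt1 = q ∧
      ConjugateAlong p γ := by
  obtain ⟨⟨γ, L, t₀, ht₀, hγ, -, rfl, rfl, hd, hnot_min⟩, hcut⟩ := hq
  let T₀ : I01 := ⟨t₀, mem_Icc_of_Ioo ht₀⟩
  have hmin : IsGeod (initialArc γ T₀) (L * t₀) := (hγ.isGeod_initialArc_iff T₀).2 hd
  refine ⟨initialArc γ T₀, L * t₀, hmin, initialArc_pt0 γ T₀, initialArc_pt1 γ T₀,
    hγ.initialArc_mem_locGeodFrom T₀, ?_⟩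
  rintro ⟨U, -, hU, hemb⟩
  have hmin_near : ∀ᶠ t in 𝓝 T₀, IsGeod (initialArc γ t) (L * t) :=
    hγ.eventually_isGeod_initialArc_of_injOn_endpt hgeo hmin hcut hU
      (injOn_iff_injective.2 hemb.injective)
  have : (𝓝[>] T₀).NeBot := nhdsGT_neBot_of_exists_gt ⟨1, ht₀.2⟩
  obtain ⟨t, ht, hlt⟩ :=
    ((hmin_near.filter_mono nhdsWithin_le_nhds).and (self_mem_nhdsWithin (s := Ioi T₀))).exists
  exact hnot_min t ⟨hlt, t.2.2⟩ ((hγ.isGeod_initialArc_iff t).1 ht)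

end InjSoul
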